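/- arXiv:2401.10847 — 2 statements merged into one kernel-verified Lean document; each statement's English description precedes it below -/
import Mathlib

section
/- Let F be a finite graph with at least one edge and let (H,T) be an F-saturated blueprint. Then every graph T+e obtained by adding an edge between two non-adjacent vertices of T, and every graph 2T+e obtained from the disjoint union of two copies of T by adding an edge with one endpoint in each copy, contains a connected component of F that is not contained in T. -/
open SimpleGraph Filter Topology

/-- `H` (on `β`) is contained in `G` (on `α`): `G` has a subgraph isomorphic to `H`. -/
def Contains {α β : Type*} (G : SimpleGraph α) (H : SimpleGraph β) : Prop :=
  ∃ f : β ↪ α, ∀ a b : β, H.Adj a b → G.Adj (f a) (f b)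

/-- `G` is `F`-saturated: `G` does not contain `F`, but adding any missing edge creates `F`. -/
def SatSingle {γ α : Type*} (F : SimpleGraph γ) (G : SimpleGraph α) : Prop :=
  (¬ Contains G F) ∧
    ∀ u v : α, u ≠ v → ¬ G.Adj u v → Contains (G ⊔ SimpleGraph.fromEdgeSet {s(u, v)}) F

/-- The disjoint union of two graphs. -/
def disjUnionG {α β : Type*} (G : SimpleGraph α) (H : SimpleGraph β) : SimpleGraph (α ⊕ β) :=
  SimpleGraph.fromRel (fun x y =>
    match x, y with
    | Sum.inl a, Sum.inl b => G.Adj a b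
    | Sum.inr a, Sum.inr b => H.Adj a b
    | _, _ => False)

/-- `H ∪ kT`: the disjoint union of `H` with `k` copies of `T`. -/
def unionCopies {α β : Type*} (H : SimpleGraph α) (k : ℕ) (T : SimpleGraph β) :
    SimpleGraph (α ⊕ Fin k × β) :=
  SimpleGraph.fromRel (fun x y =>
    match x, y with
    | Sum.inl a, Sum.inl b => H.Adj a b
    | Sum.inr (i, a), Sum.inr (j, b) => i = j ∧ T.Adj a b
    | _, _ => False)

/-- `T` is a tree such that every graph `T+e` (obtained by adding an edge between two
non-adjacent vertices of `T`) and every graph `2T+e` (obtained from the disjoint union of two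
copies of `T` by adding an edge with one endpoint in each copy) contains a connected component of
`F` that is not contained in `T`. -/
def GoodTree {nF : ℕ} (F : SimpleGraph (Fin nF)) (t : ℕ) (T : SimpleGraph (Fin t)) : Prop :=
  T.IsTree ∧
  (∀ u v : Fin t, u ≠ v → ¬ T.Adj u v →
    ∃ c : F.ConnectedComponent, ¬ Contains T (SimpleGraph.induce c.supp F) ∧
      Contains (T ⊔ SimpleGraph.fromEdgeSet {s(u, v)}) (SimpleGraph.induce c.supp F)) ∧
  (∀ u v : Fin t,
    ∃ c : F.ConnectedComponent, ¬ Contains T (SimpleGraph.induce c.supp F) ∧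
      Contains (disjUnionG T T ⊔ SimpleGraph.fromEdgeSet {s(Sum.inl u, Sum.inr v)})
        (SimpleGraph.induce c.supp F))

/-!
Adding an edge `e` inside one copy of `T` (or between two copies) turns `H ∪ kT` into the disjoint
union of some `H ∪ mT` and `D = T + e` (or `D = 2T + e`), and by saturation this graph contains `F`.
Each component of `F` then lies either in `H ∪ mT` or in `D`. If every component of `F` contained
in `D` were contained in `T`, those lying in `D` could be moved to fresh copies of `T`, one for each
component, and so `F` would be contained in `H ∪ nT` for all large `n`.
-/

variable {α β γ δ ι κ : Type*}

section Containment

variable {F : SimpleGraph γ} {G : SimpleGraph α} {G' : SimpleGraph β}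

theorem contains_iff_isContained : Contains G F ↔ F ⊑ G :=
  ⟨fun ⟨f, hf⟩ => ⟨⟨⟨f, hf _ _⟩, f.injective⟩⟩,
    fun ⟨f⟩ => ⟨f.toEmbedding, fun _ _ => f.toHom.map_adj⟩⟩

theorem exists_copy_comp_eq_of_forall_mem_range (e : G ↪g G') (f : Copy F G')
    (hf : ∀ x, f x ∈ Set.range e) : ∃ g : Copy F G, ∀ x, e (g x) = f x := by
  choose g hg using hf
  refine ⟨⟨⟨g, fun {x y} hxy => ?_⟩, fun x y hxy => f.injective ?_⟩, hg⟩
  · rw [← e.map_adj_iff, hg, hg]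
    exact f.toHom.map_adj hxy
  · change f x = f y
    rw [← hg, ← hg]
    exact congrArg e hxy

/-- Extends an isomorphism to added edges, so that saturation can be transported along it. -/
def supEdgeIso (e : G ≃g G') (u v : α) : G ⊔ edge u v ≃g G' ⊔ edge (e u) (e v) where
  toEquiv := e.toEquiv
  map_rel_iff' := by simp [edge_adj, e.map_adj_iff]

theorem SatSingle.of_iso (h : SatSingle F G) (e : G ≃g G') : SatSingle F G' := by
  simp only [SatSingle, contains_iff_isContained] at h ⊢
  refine ⟨fun hF => h.1 (hF.trans e.isContained'), fun u v huv hadj => ?_⟩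
  have hF : F ⊑ G ⊔ edge (e.symm u) (e.symm v) :=
    h.2 _ _ (e.symm.injective.ne huv) (by rwa [e.symm.map_adj_iff])
  simpa only [RelIso.apply_symm_apply] using! hF.trans (supEdgeIso e _ _).isContained

theorem homOfConnectedComponents_injective {f : ∀ c : F.ConnectedComponent, c.toSimpleGraph →g G}
    (hinj : ∀ c, Function.Injective (f c))
    (hdisj : Pairwise fun c d => Disjoint (Set.range (f c)) (Set.range (f d))) :
    Function.Injective (homOfConnectedComponents F f) := by
  intro x y hxy
  have hmk : F.connectedComponentMk x = F.connectedComponentMk y :=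
    hdisj.eq (Set.not_disjoint_iff.2 ⟨_, ⟨_, rfl⟩, ⟨_, hxy.symm⟩⟩)
  have hfx : ∀ c (hx : F.connectedComponentMk x = c),
      f (F.connectedComponentMk x) ⟨x, rfl⟩ = f c ⟨x, hx⟩ := by
    rintro _ rfl
    rfl
  exact congrArg Subtype.val (hinj _ ((hfx _ hmk).symm.trans hxy))

end Containment

section DisjointCopies

variable (H : SimpleGraph α) (T : SimpleGraph β)

/-- The disjoint union of copies of `T` indexed by `ι`, encoded as the box product of `T` with the
edgeless graph on `ι`. -/
def disjointCopies (ι : Type*) (T : SimpleGraph β) : SimpleGraph (ι × β) :=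
  (⊥ : SimpleGraph ι).boxProd T

@[simp]
theorem disjointCopies_adj {x y : ι × β} :
    (disjointCopies ι T).Adj x y ↔ x.1 = y.1 ∧ T.Adj x.2 y.2 := by
  simp [disjointCopies, boxProd_adj, and_comm]

/-- The embedding induced by an injection of index sets; it gives monotonicity in the number of
copies. -/
def disjointCopiesEmbedding (f : ι ↪ κ) : disjointCopies ι T ↪g disjointCopies κ T where
  toEmbedding := f.prodMap (.refl β)
  map_rel_iff' := by simp

/-- Reindexes a family of copies; used with `Fin (k + 1) ≃ Fin k ⊕ Fin 1`. -/
def disjointCopiesCongr (e : ι ≃ κ) : disjointCopies ι T ≃g disjointCopies κ T where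
  toEquiv := e.prodCongr (.refl β)
  map_rel_iff' := by simp

/-- Splits a family of copies along a decomposition of its index set. -/
def disjointCopiesSumIso :
    disjointCopies (ι ⊕ κ) T ≃g disjointCopies ι T ⊕g disjointCopies κ T where
  toEquiv := .sumProdDistrib ι κ β
  map_rel_iff' := by simp

/-- Identifies a one-member family of copies of `T` with `T`. -/
def disjointCopiesUniqueIso [Unique ι] : disjointCopies ι T ≃g T where
  toEquiv := .uniqueProd β ι
  map_rel_iff' := by simp [Unique.eq_default]

/-- Regroups `H ∪ (m + k)T` as `(H ∪ mT) ∪ kT`, with arbitrary index types for `m` and `k`. -/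
def sumDisjointCopiesIso :
    H ⊕g disjointCopies (ι ⊕ κ) T ≃g (H ⊕g disjointCopies ι T) ⊕g disjointCopies κ T :=
  (Iso.sumCongr .refl (disjointCopiesSumIso T)).trans Iso.sumAssoc.symm

end DisjointCopies

section Sum

variable {F : SimpleGraph γ} {A : SimpleGraph α} {D : SimpleGraph δ} {T : SimpleGraph β}

theorem disjUnionG_eq_sum : disjUnionG A D = A ⊕g D := by
  ext (a | a) (b | b) <;>
    simp +contextual [disjUnionG, adj_comm, A.ne_of_adj, D.ne_of_adj]

theorem sum_sup_edge_inr (u v : δ) :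
    (A ⊕g D) ⊔ edge (Sum.inr u) (Sum.inr v) = A ⊕g (D ⊔ edge u v) := by
  ext (a | a) (b | b) <;> simp [edge_adj]

theorem isLeft_eq_of_reachable {x y : α ⊕ δ} (h : (A ⊕g D).Reachable x y) :
    x.isLeft = y.isLeft := by
  rcases x with a | a <;> rcases y with b | b
  · rfl
  · exact absurd h (not_reachable_sum_inl_inr a b)
  · exact absurd h.symm (not_reachable_sum_inl_inr b a)
  · rfl

theorem exists_copy_inl_or_inr (hF : F.Preconnected) (f : Copy F (A ⊕g D)) :
    (∃ g : Copy F A, ∀ x, Sum.inl (g x) = f x) ∨ (∃ g : Copy F D, ∀ x, Sum.inr (g x) = f x) := by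
  have hside : ∀ x y, (f x).isLeft = (f y).isLeft := fun x y =>
    isLeft_eq_of_reachable ((hF x y).map f.toHom)
  by_cases hleft : ∀ x, (f x).isLeft
  · refine .inl (exists_copy_comp_eq_of_forall_mem_range Embedding.sumInl f fun x => ?_)
    exact (Sum.isLeft_iff.1 (hleft x)).imp fun _ => Eq.symm
  · obtain ⟨y, hy⟩ := not_forall.1 hleft
    refine .inr (exists_copy_comp_eq_of_forall_mem_range Embedding.sumInr f fun x => ?_)
    have hx : (f x).isRight := Sum.not_isLeft.1 (hside x y ▸ hy)
    exact (Sum.isRight_iff.1 hx).imp fun _ => Eq.symm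

theorem isContained_sum_disjointCopies (hF : F ⊑ A ⊕g D)
    (hT : ∀ c : F.ConnectedComponent, c.toSimpleGraph ⊑ D → c.toSimpleGraph ⊑ T) :
    F ⊑ A ⊕g disjointCopies F.ConnectedComponent T := by
  obtain ⟨φ⟩ := hF
  have hcomp : ∀ c : F.ConnectedComponent,
      ∃ ψ : Copy c.toSimpleGraph (A ⊕g disjointCopies F.ConnectedComponent T),
        ∀ x : c, (∃ a, φ x = Sum.inl a ∧ ψ x = Sum.inl a) ∨ ∃ b, ψ x = Sum.inr (c, b) := by
    intro c
    rcases exists_copy_inl_or_inr c.connected_toSimpleGraph.preconnected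
      (φ.comp (Copy.induce F c.supp)) with ⟨g, hg⟩ | ⟨g, -⟩
    · exact ⟨Embedding.sumInl.toCopy.comp g, fun x => .inl ⟨g x, (hg x).symm, rfl⟩⟩
    · obtain ⟨f⟩ := hT c ⟨g⟩
      exact ⟨(Embedding.sumInr.comp (boxProdRight _ T c)).toCopy.comp f, fun x => .inr ⟨f x, rfl⟩⟩
  choose ψ hψ using hcomp
  refine ⟨⟨_, homOfConnectedComponents_injective (fun c => (ψ c).injective) fun c d hcd => ?_⟩⟩
  refine Set.disjoint_left.2 ?_
  rintro _ ⟨x, rfl⟩ ⟨y, hxy⟩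
  replace hxy : ψ d y = ψ c x := hxy
  rcases hψ c x with ⟨a, hφx, hψx⟩ | ⟨a, hψx⟩ <;> rcases hψ d y with ⟨b, hφy, hψy⟩ | ⟨b, hψy⟩ <;>
    rw [hψx, hψy] at hxy
  · obtain rfl := Sum.inl_injective hxy
    have hval : (x : γ) = y := φ.injective (hφx.trans hφy.symm)
    exact hcd (ConnectedComponent.eq_of_common_vertex x.2 (hval ▸ y.2))
  · exact Sum.inr_ne_inl hxy
  · exact Sum.inl_ne_inr hxy
  · exact hcd (congrArg Prod.fst (Sum.inr_injective hxy)).symm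

theorem SatSingle.exists_component_isContained_sup_edge (hsat : SatSingle F (A ⊕g D))
    (hfree : F.Free (A ⊕g disjointCopies F.ConnectedComponent T)) {u v : δ} (huv : u ≠ v)
    (hadj : ¬ D.Adj u v) :
    ∃ c : F.ConnectedComponent, ¬ c.toSimpleGraph ⊑ T ∧ c.toSimpleGraph ⊑ D ⊔ edge u v := by
  have hF : F ⊑ A ⊕g (D ⊔ edge u v) := by
    rw [← sum_sup_edge_inr, ← contains_iff_isContained]
    exact hsat.2 _ _ (Sum.inr_injective.ne huv) (by rwa [sum_adj_inr])
  by_contra hcon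
  exact hfree (isContained_sum_disjointCopies hF fun c hc =>
    by_contra fun hcT => hcon ⟨c, hcT, hc⟩)

end Sum

section Copies

variable {F : SimpleGraph γ} (H : SimpleGraph α) (T : SimpleGraph β)

theorem unionCopies_eq_sum (k : ℕ) :
    unionCopies H k T = H ⊕g disjointCopies (Fin k) T := by
  ext (a | ⟨i, a⟩) (b | ⟨j, b⟩) <;>
    simp +contextual [unionCopies, adj_comm, eq_comm, H.ne_of_adj, T.ne_of_adj]

theorem nonempty_unionCopies_succ_iso (k : ℕ) :
    Nonempty (unionCopies H (k + 1) T ≃g unionCopies H k T ⊕g T) := by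
  rw [unionCopies_eq_sum, unionCopies_eq_sum]
  exact ⟨((Iso.sumCongr .refl (disjointCopiesCongr T finSumFinEquiv.symm)).trans
    (sumDisjointCopiesIso H T)).trans (Iso.sumCongr .refl (disjointCopiesUniqueIso T))⟩

variable {H T}

theorem unionCopies_sum_isContained [Finite κ] {m n : ℕ} (hmn : m + Nat.card κ ≤ n) :
    unionCopies H m T ⊕g disjointCopies κ T ⊑ unionCopies H n T := by
  have := Fintype.ofFinite κ
  obtain ⟨f⟩ : Nonempty (Fin m ⊕ κ ↪ Fin n) :=
    Function.Embedding.nonempty_of_card_le (by simpa using hmn)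
  rw [unionCopies_eq_sum, unionCopies_eq_sum]
  exact (sumDisjointCopiesIso H T).isContained'.trans
    (Embedding.sum .refl (disjointCopiesEmbedding T f)).isContained

theorem free_unionCopies_sum [Finite κ] (h : ∃ᶠ k in atTop, F.Free (unionCopies H k T)) (m : ℕ) :
    F.Free (unionCopies H m T ⊕g disjointCopies κ T) := by
  obtain ⟨n, hmn, hfree⟩ := frequently_atTop.1 h (m + Nat.card κ)
  exact fun hF => hfree (hF.trans (unionCopies_sum_isContained hmn))

end Copies

theorem stmt18_general {F : SimpleGraph γ} [Finite F.ConnectedComponent] {H : SimpleGraph α}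
    {T : SimpleGraph β} (hbp : ∃ᶠ k in atTop, SatSingle F (unionCopies H k T)) :
    (∀ u v : β, u ≠ v → ¬ T.Adj u v →
      ∃ c : F.ConnectedComponent, ¬ Contains T (F.induce c.supp) ∧
        Contains (T ⊔ fromEdgeSet {s(u, v)}) (F.induce c.supp)) ∧
    (∀ u v : β,
      ∃ c : F.ConnectedComponent, ¬ Contains T (F.induce c.supp) ∧
        Contains (disjUnionG T T ⊔ fromEdgeSet {s(Sum.inl u, Sum.inr v)}) (F.induce c.supp)) := by
  simp only [contains_iff_isContained, disjUnionG_eq_sum]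
  have hfree := free_unionCopies_sum (κ := F.ConnectedComponent)
    (hbp.mono fun k hk => mt contains_iff_isContained.2 hk.1)
  -- One copy of `T` is split off for `T + e` and two for `2T + e`.
  obtain ⟨k, hk, hsat⟩ := frequently_atTop.1 hbp 2
  obtain ⟨m, rfl⟩ := Nat.exists_eq_add_of_le' hk
  obtain ⟨e₁⟩ := nonempty_unionCopies_succ_iso H T (m + 1)
  obtain ⟨e₂⟩ := nonempty_unionCopies_succ_iso H T m
  have hsat₁ : SatSingle F (unionCopies H (m + 1) T ⊕g T) := hsat.of_iso e₁
  have hsat₂ : SatSingle F (unionCopies H m T ⊕g (T ⊕g T)) :=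
    hsat₁.of_iso ((Iso.sumCongr e₂ .refl).trans Iso.sumAssoc)
  exact ⟨fun u v => hsat₁.exists_component_isContained_sup_edge (hfree (m + 1)),
    fun u v => hsat₂.exists_component_isContained_sup_edge (hfree m) Sum.inl_ne_inr
      (not_adj_sum_inl_inr u v)⟩

/-- If `(H,T)` is an `F`-saturated blueprint (`T` a tree, `H ∪ kT` `F`-saturated for all large
`k`), then every `T+e` and every `2T+e` contains a connected component of `F` that is not
contained in `T`. -/
theorem stmt18 {nF t nH : ℕ} (F : SimpleGraph (Fin nF)) (hF : 1 ≤ Nat.card F.edgeSet)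
    (T : SimpleGraph (Fin t)) (hT : T.IsTree) (H : SimpleGraph (Fin nH))
    (hbp : ∃ K : ℕ, ∀ k : ℕ, K ≤ k → SatSingle F (unionCopies H k T)) :
    (∀ u v : Fin t, u ≠ v → ¬ T.Adj u v →
      ∃ c : F.ConnectedComponent, ¬ Contains T (SimpleGraph.induce c.supp F) ∧
        Contains (T ⊔ SimpleGraph.fromEdgeSet {s(u, v)}) (SimpleGraph.induce c.supp F)) ∧
    (∀ u v : Fin t,
      ∃ c : F.ConnectedComponent, ¬ Contains T (SimpleGraph.induce c.supp F) ∧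
        Contains (disjUnionG T T ⊔
            SimpleGraph.fromEdgeSet {s((Sum.inl u : Fin t ⊕ Fin t), (Sum.inr v : Fin t ⊕ Fin t))})
          (SimpleGraph.induce c.supp F)) :=
  stmt18_general (eventually_atTop.2 hbp).frequently
end

section
/- Let F be a finite graph with at least one edge and let T be a tree such that no connected component of F is contained in T, and such that every graph T+e obtained by adding an edge between two non-adjacent vertices of T, and every graph 2T+e obtained from the disjoint union of two copies of T by adding an edge with one endpoint in each copy, contains a connected component of F. Then for every integer k ≥ 0, the disjoint union of the complete graph on |V(F)| − 1 vertices with k copies of T is F-saturated. -/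
open SimpleGraph Filter Topology

/-!
Since `F` has one vertex more than the clique `⊤` on `α`, a copy of `F` in `⊤ ⊕g kT` leaves the
clique; the component of a vertex outside the clique would lie in a copy of `T`, which is excluded.

Conversely, the clique accommodates any proper part of `F`. An edge added inside the copies of `T`
creates a component of `F` there, and the other components fit into the clique. If the added edge
joins `a` in the clique to `w` in a copy of `T`, let `v` be the vertex `w` of another copy of `T`
and take a component of `F` in `2T + vw`. Together with the clique this gives a copy of `F` in
`(⊤ ⊕g T) ⊕g T` plus the edge `vw`, and this copy reaches the second `T` because `⊤ ⊕g T` does not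
contain `F`. Hence its part in `⊤ ⊕g T` can be moved into the clique, with `v` going to `a`.

The disjoint union of copies of `T` indexed by `ι` is encoded as `(⊥ : SimpleGraph ι) □ T`.
-/

section Translation

variable {α β : Type*}

theorem contains_iff_isContained_s19 {G : SimpleGraph α} {H : SimpleGraph β} :
    Contains G H ↔ H ⊑ G :=
  ⟨fun ⟨f, hf⟩ => ⟨⟨f, fun {a b} => hf a b⟩, f.injective⟩,
    fun ⟨f⟩ => ⟨f.toEmbedding, fun _ _ hab => f.toHom.map_adj hab⟩⟩

theorem disjUnionG_eq_sum_s19 (G : SimpleGraph α) (H : SimpleGraph β) : disjUnionG G H = G ⊕g H := by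
  ext (a | a) (b | b)
  · simpa [disjUnionG, adj_comm] using Adj.ne
  · simp [disjUnionG]
  · simp [disjUnionG]
  · simpa [disjUnionG, adj_comm] using Adj.ne

theorem unionCopies_eq_sum_boxProd (H : SimpleGraph α) (k : ℕ) (T : SimpleGraph β) :
    unionCopies H k T = H ⊕g ((⊥ : SimpleGraph (Fin k)) □ T) := by
  have adj_inr_inr (i j : Fin k) (a b : β) :
      (unionCopies H k T).Adj (.inr (i, a)) (.inr (j, b)) ↔ T.Adj a b ∧ i = j := by
    simp only [unionCopies, fromRel_adj, ne_eq, Sum.inr.injEq, Prod.mk.injEq, T.adj_comm b a,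
      eq_comm (a := j), or_self, and_comm (a := i = j)]
    exact and_iff_right_of_imp fun h hab => h.1.ne hab.1
  ext (a | ⟨i, a⟩) (b | ⟨j, b⟩)
  · simpa [unionCopies, adj_comm] using Adj.ne
  · simp [unionCopies]
  · simp [unionCopies]
  · simp [adj_inr_inr, boxProd_adj]

end Translation

section Containment

variable {V W U ι α β γ : Type*}

theorem sum_isContained_sum {A : SimpleGraph V} {B : SimpleGraph W} {A' : SimpleGraph U}
    {B' : SimpleGraph γ} (hA : A ⊑ A') (hB : B ⊑ B') : A ⊕g B ⊑ A' ⊕g B' := by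
  obtain ⟨f⟩ := hA
  obtain ⟨g⟩ := hB
  exact ⟨.sum f.toHom g.toHom, Sum.map_injective.mpr ⟨f.injective, g.injective⟩⟩

theorem sup_edge_isContained_sup_edge {A : SimpleGraph V} {B : SimpleGraph W} (f : Copy A B)
    (u v : V) : A ⊔ edge u v ⊑ B ⊔ edge (f u) (f v) := by
  refine ⟨⟨f, fun {a b} hab => ?_⟩, f.injective⟩
  rcases hab with hab | hab
  · exact .inl (f.toHom.map_adj hab)
  · rw [edge_adj] at hab
    refine .inr ((edge_adj ..).mpr ⟨?_, f.injective.ne hab.2⟩)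
    rcases hab.1 with ⟨rfl, rfl⟩ | ⟨rfl, rfl⟩
    · exact .inl ⟨rfl, rfl⟩
    · exact .inr ⟨rfl, rfl⟩

theorem sum_sup_edge_inr_s19 (A : SimpleGraph V) (B : SimpleGraph W) (u v : W) :
    (A ⊕g B) ⊔ edge (.inr u) (.inr v) = A ⊕g (B ⊔ edge u v) := by
  ext (a | a) (b | b) <;> simp [edge_adj]

theorem isContained_of_forall_mem_range {H : SimpleGraph V} {G : SimpleGraph W}
    {G₀ : SimpleGraph U} (f : Copy H G) {i : U → W} (hf : ∀ x, f x ∈ Set.range i)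
    (hi : ∀ ⦃a b⦄, G.Adj (i a) (i b) → G₀.Adj a b) : H ⊑ G₀ := by
  choose g hg using hf
  refine ⟨⟨g, fun {x y} hxy => hi ?_⟩, fun x y hxy => f.injective ?_⟩
  · rw [hg, hg]
    exact f.toHom.map_adj hxy
  · exact (hg x).symm.trans ((congrArg i hxy).trans (hg y))

theorem isContained_left_of_isContained_sum {F : SimpleGraph V} {A : SimpleGraph α}
    {B : SimpleGraph β} (hB : ∀ c : F.ConnectedComponent, ¬ F.induce c.supp ⊑ B)
    (h : F ⊑ A ⊕g B) : F ⊑ A := by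
  obtain ⟨f⟩ := h
  refine isContained_of_forall_mem_range f (i := Sum.inl) (fun x => ?_) fun _ _ => sum_adj_inl.mp
  rcases hx : f x with a | b
  · exact ⟨a, rfl⟩
  let c := F.connectedComponentMk x
  have hright : ∀ y : c.supp, f y ∈ Set.range Sum.inr := by
    intro y
    have hxy : (A ⊕g B).Reachable (f y) (f x) := (ConnectedComponent.exact y.2).map f.toHom
    rcases hy : f y with a | b'
    · rw [hx, hy] at hxy
      exact (not_reachable_sum_inl_inr a b hxy).elim
    · exact ⟨b', rfl⟩
  exact (hB c (isContained_of_forall_mem_range (f.comp (.induce F c.supp)) hright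
    fun _ _ => sum_adj_inr.mp)).elim

theorem isContained_of_isContained_bot_boxProd {H : SimpleGraph V} {T : SimpleGraph β}
    (hH : H.Preconnected) (h : H ⊑ (⊥ : SimpleGraph ι) □ T) : H ⊑ T := by
  obtain ⟨f⟩ := h
  have hfst : ∀ x y, (f x).1 = (f y).1 := fun x y =>
    reachable_bot.mp (reachable_boxProd.mp ((hH x y).map f.toHom)).1
  refine ⟨⟨fun x => (f x).2, fun {x y} hxy => ?_⟩, fun x y hxy => ?_⟩
  · simpa [boxProd_adj, hfst x y] using f.toHom.map_adj hxy
  · exact f.injective (Prod.ext (hfst x y) hxy)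

theorem sum_sup_edge_isContained_bot_boxProd_sup_edge (T : SimpleGraph β) {i j : ι} (hij : i ≠ j)
    (u v : β) : (T ⊕g T) ⊔ edge (.inl u) (.inr v) ⊑
      ((⊥ : SimpleGraph ι) □ T) ⊔ edge (i, u) (j, v) := by
  let f : T ⊕g T →g (⊥ : SimpleGraph ι) □ T :=
    ⟨Sum.elim (Prod.mk i) (Prod.mk j), by rintro (a | a) (b | b) hab <;> simp_all⟩
  have hf : Function.Injective f :=
    (Prod.mk_right_injective i).sumElim (Prod.mk_right_injective j) fun _ _ h =>
      hij (congrArg Prod.fst h)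
  exact sup_edge_isContained_sup_edge (f.toCopy hf) (.inl u) (.inr v)

theorem isContained_induce_compl_sum_induce_supp {F : SimpleGraph V} (c : F.ConnectedComponent) :
    F ⊑ F.induce c.suppᶜ ⊕g F.induce c.supp := by
  classical
  let e := (Equiv.Set.sumCompl c.supp).symm.trans (.sumComm _ _)
  refine ⟨⟨e, fun {x y} hxy => ?_⟩, e.injective⟩
  have hmem := c.mem_supp_congr_adj hxy
  by_cases hx : x ∈ c.supp
  · simpa [e, Equiv.Set.sumCompl_symm_apply_of_mem, hx, hmem.mp hx] using hxy
  · simpa [e, Equiv.Set.sumCompl_symm_apply_of_notMem, hx, mt hmem.mpr hx] using hxy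

end Containment

section Clique

variable {V α β γ : Type*}

theorem isContained_top_iff_card_le [Finite V] [Finite α] {F : SimpleGraph V} :
    F ⊑ (⊤ : SimpleGraph α) ↔ Nat.card V ≤ Nat.card α := by
  have := Fintype.ofFinite V
  have := Fintype.ofFinite α
  rw [Nat.card_eq_fintype_card, Nat.card_eq_fintype_card]
  exact isContained_top_iff.trans Function.Embedding.nonempty_iff_card_le

theorem isContained_top_sum_of_component [Finite V] [Finite α] {F : SimpleGraph V}
    {B : SimpleGraph β} (hcard : Nat.card V ≤ Nat.card α + 1) (c : F.ConnectedComponent)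
    (hc : F.induce c.supp ⊑ B) : F ⊑ (⊤ : SimpleGraph α) ⊕g B := by
  have hlt : Nat.card ↥c.suppᶜ < Nat.card V :=
    Set.ncard_lt_card (by simpa using c.nonempty_supp.ne_empty)
  exact (isContained_induce_compl_sum_induce_supp c).trans
    (sum_isContained_sum (isContained_top_iff_card_le.mpr (by lia)) hc)

theorem exists_apply_eq_inr_of_not_isContained {F : SimpleGraph V} {C : SimpleGraph γ}
    {B : SimpleGraph β} {v : γ} {w : β} (hC : ¬ F ⊑ C)
    (f : Copy F ((C ⊕g B) ⊔ edge (.inl v) (.inr w))) : ∃ x b, f x = .inr b := by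
  by_contra! hleft
  refine hC (isContained_of_forall_mem_range f (i := Sum.inl) (fun x => ?_) fun y z hyz => ?_)
  · rcases hx : f x with y | b
    · exact ⟨y, rfl⟩
    · exact (hleft x b hx).elim
  · simpa [edge_adj] using hyz

theorem ncard_preimage_inl_range_lt [Finite V] {f : V → γ ⊕ β} {x : V} {b : β}
    (hx : f x = .inr b) : (Sum.inl ⁻¹' Set.range f).ncard < Nat.card V := by
  have hsub : Sum.inl '' (Sum.inl ⁻¹' Set.range f) ⊆ f '' {x}ᶜ := by
    rintro _ ⟨y, ⟨z, hz⟩, rfl⟩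
    refine ⟨z, fun hzx => ?_, hz⟩
    rw [Set.mem_singleton_iff.mp hzx, hx] at hz
    cases hz
  calc (Sum.inl ⁻¹' Set.range f).ncard
      = (Sum.inl '' (Sum.inl ⁻¹' Set.range f) : Set (γ ⊕ β)).ncard :=
        (Set.ncard_image_of_injective _ Sum.inl_injective).symm
    _ ≤ (f '' {x}ᶜ).ncard := Set.ncard_le_ncard hsub
    _ ≤ ({x}ᶜ : Set V).ncard := Set.ncard_image_le
    _ < Nat.card V := Set.ncard_lt_card (by simp)

theorem exists_injOn_apply_eq [Finite α] {s : Set γ} (hs : s.Finite) (hcard : s.ncard ≤ Nat.card α)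
    (v : γ) (a : α) : ∃ e : γ → α, s.InjOn e ∧ e v = a := by
  classical
  have : Nonempty α := ⟨a⟩
  obtain ⟨e, -, he⟩ := hs.exists_injOn_of_encard_le (t := (Set.univ : Set α)) <| by
    rw [Set.encard_univ, ENat.card_eq_coe_natCard, ← hs.cast_ncard_eq]
    exact_mod_cast hcard
  exact ⟨Equiv.swap (e v) a ∘ e, (Equiv.injective _).comp_injOn he, Equiv.swap_apply_left ..⟩

theorem isContained_top_sum_sup_edge_of_sum_sup_edge [Finite V] [Finite α] {F : SimpleGraph V}
    {C : SimpleGraph γ} {B : SimpleGraph β} (hcard : Nat.card V ≤ Nat.card α + 1) {v : γ} {w : β}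
    (h : F ⊑ (C ⊕g B) ⊔ edge (.inl v) (.inr w)) (hC : ¬ F ⊑ C) (a : α) :
    F ⊑ ((⊤ : SimpleGraph α) ⊕g B) ⊔ edge (.inl a) (.inr w) := by
  obtain ⟨f⟩ := h
  obtain ⟨x, b, hx⟩ := exists_apply_eq_inr_of_not_isContained hC f
  have hlt := ncard_preimage_inl_range_lt hx
  obtain ⟨e, heinj, hev⟩ := exists_injOn_apply_eq (s := Sum.inl ⁻¹' Set.range f)
    ((Set.finite_range f).preimage Sum.inl_injective.injOn) (by lia) v a
  have hinj : (Set.range f).InjOn (Sum.map e id : γ ⊕ β → α ⊕ β) := by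
    rintro (y | y) hy (z | z) hz hyz
    · exact congrArg _ (heinj hy hz (Sum.inl_injective hyz))
    · cases hyz
    · cases hyz
    · exact congrArg _ (Sum.inr_injective hyz)
  have hadj : ∀ p ∈ Set.range f, ∀ q ∈ Set.range f, ((C ⊕g B) ⊔ edge (.inl v) (.inr w)).Adj p q →
      (((⊤ : SimpleGraph α) ⊕g B) ⊔ edge (.inl a) (.inr w)).Adj (p.map e id) (q.map e id) := by
    rintro (y | y) hy (z | z) hz hyz
    · exact .inl (sum_adj_inl.mpr (heinj.ne hy hz fun h => hyz.ne (congrArg _ h)))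
    · obtain ⟨rfl, rfl⟩ : y = v ∧ z = w := by simpa [edge_adj] using hyz
      simp [edge_adj, hev]
    · obtain ⟨rfl, rfl⟩ : y = w ∧ z = v := by simpa [edge_adj] using hyz
      simp [edge_adj, hev]
    · exact .inl (sum_adj_inr.mpr (by simpa [edge_adj] using hyz))
  exact ⟨⟨fun x => (f x).map e id, fun hxy => hadj _ ⟨_, rfl⟩ _ ⟨_, rfl⟩ (f.toHom.map_adj hxy)⟩,
    fun x y hxy => f.injective (hinj ⟨x, rfl⟩ ⟨y, rfl⟩ hxy)⟩

theorem not_isContained_top_sum [Finite V] [Finite α] {F : SimpleGraph V} {B : SimpleGraph β}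
    (hcard : Nat.card α < Nat.card V)
    (hB : ∀ c : F.ConnectedComponent, ¬ F.induce c.supp ⊑ B) : ¬ F ⊑ (⊤ : SimpleGraph α) ⊕g B :=
  fun h => hcard.not_ge (isContained_top_iff_card_le.mp (isContained_left_of_isContained_sum hB h))

theorem isContained_top_sum_sup_edge_of_component [Finite V] [Finite α] {F : SimpleGraph V}
    {A : SimpleGraph γ} {B : SimpleGraph β} (hcard : Nat.card V = Nat.card α + 1)
    (hA : ∀ c : F.ConnectedComponent, ¬ F.induce c.supp ⊑ A) {v : γ} {w : β}
    {c : F.ConnectedComponent} (hc : F.induce c.supp ⊑ (A ⊕g B) ⊔ edge (.inl v) (.inr w)) (a : α) :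
    F ⊑ ((⊤ : SimpleGraph α) ⊕g B) ⊔ edge (.inl a) (.inr w) := by
  have hF := isContained_top_sum_of_component (α := α) hcard.le c hc
  rw [← sum_sup_edge_inr_s19] at hF
  exact isContained_top_sum_sup_edge_of_sum_sup_edge hcard.le
    (hF.trans (sup_edge_isContained_sup_edge Iso.sumAssoc.symm.toCopy _ _))
    (not_isContained_top_sum (by lia) hA) a

end Clique

section Saturation

variable {V α β ι : Type*} {F : SimpleGraph V} {T : SimpleGraph β}

theorem exists_component_isContained_bot_boxProd_sup_edge
    (h1 : ∀ u v, u ≠ v → ¬ T.Adj u v →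
      ∃ c : F.ConnectedComponent, F.induce c.supp ⊑ T ⊔ edge u v)
    (h2 : ∀ u v, ∃ c : F.ConnectedComponent,
      F.induce c.supp ⊑ (T ⊕g T) ⊔ edge (.inl u) (.inr v))
    {p q : ι × β} (hne : p ≠ q) (hadj : ¬ ((⊥ : SimpleGraph ι) □ T).Adj p q) :
    ∃ c : F.ConnectedComponent, F.induce c.supp ⊑ ((⊥ : SimpleGraph ι) □ T) ⊔ edge p q := by
  obtain ⟨i, u⟩ := p
  obtain ⟨j, v⟩ := q
  by_cases hij : i = j
  · subst hij
    rw [boxProd_adj_right] at hadj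
    obtain ⟨c, hc⟩ := h1 u v (fun huv => hne (huv ▸ rfl)) hadj
    exact ⟨c, hc.trans (sup_edge_isContained_sup_edge (boxProdRight ⊥ T i).toCopy u v)⟩
  · obtain ⟨c, hc⟩ := h2 u v
    exact ⟨c, hc.trans (sum_sup_edge_isContained_bot_boxProd_sup_edge T hij u v)⟩

theorem isContained_top_sum_bot_boxProd_sup_edge_inl_inr [Finite V] [Finite α]
    (hcard : Nat.card V = Nat.card α + 1)
    (hT : ∀ c : F.ConnectedComponent, ¬ F.induce c.supp ⊑ T)
    (h2 : ∀ u v, ∃ c : F.ConnectedComponent,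
      F.induce c.supp ⊑ (T ⊕g T) ⊔ edge (.inl u) (.inr v)) (a : α) (p : ι × β) :
    F ⊑ ((⊤ : SimpleGraph α) ⊕g ((⊥ : SimpleGraph ι) □ T)) ⊔ edge (.inl a) (.inr p) := by
  obtain ⟨i, v⟩ := p
  obtain ⟨c, hc⟩ := h2 v v
  exact (isContained_top_sum_sup_edge_of_component hcard hT hc a).trans
    (sup_edge_isContained_sup_edge
      (Embedding.sum .refl (boxProdRight ⊥ T i)).toCopy (.inl a) (.inr v))

theorem isContained_top_sum_bot_boxProd_sup_edge [Finite V] [Finite α]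
    (hcard : Nat.card V = Nat.card α + 1)
    (hT : ∀ c : F.ConnectedComponent, ¬ F.induce c.supp ⊑ T)
    (h1 : ∀ u v, u ≠ v → ¬ T.Adj u v →
      ∃ c : F.ConnectedComponent, F.induce c.supp ⊑ T ⊔ edge u v)
    (h2 : ∀ u v, ∃ c : F.ConnectedComponent,
      F.induce c.supp ⊑ (T ⊕g T) ⊔ edge (.inl u) (.inr v))
    {x y : α ⊕ ι × β} (hne : x ≠ y)
    (hadj : ¬ ((⊤ : SimpleGraph α) ⊕g ((⊥ : SimpleGraph ι) □ T)).Adj x y) :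
    F ⊑ ((⊤ : SimpleGraph α) ⊕g ((⊥ : SimpleGraph ι) □ T)) ⊔ edge x y := by
  rcases x with a | p <;> rcases y with b | q
  · exact (hadj (sum_adj_inl.mpr fun hab => hne (congrArg _ hab))).elim
  · exact isContained_top_sum_bot_boxProd_sup_edge_inl_inr hcard hT h2 a q
  · rw [edge_comm]
    exact isContained_top_sum_bot_boxProd_sup_edge_inl_inr hcard hT h2 b p
  · rw [sum_sup_edge_inr_s19]
    obtain ⟨c, hc⟩ := exists_component_isContained_bot_boxProd_sup_edge h1 h2
      (fun hpq => hne (congrArg _ hpq)) (mt sum_adj_inr.mpr hadj)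
    exact isContained_top_sum_of_component hcard.le c hc

end Saturation

theorem stmt19_general {V α β : Type*} [Finite α] (F : SimpleGraph V) (T : SimpleGraph β)
    (hcard : Nat.card V = Nat.card α + 1)
    (hnc : ∀ c : F.ConnectedComponent, ¬ Contains T (F.induce c.supp))
    (h1 : ∀ u v : β, u ≠ v → ¬ T.Adj u v →
      ∃ c : F.ConnectedComponent, Contains (T ⊔ fromEdgeSet {s(u, v)}) (F.induce c.supp))
    (h2 : ∀ u v : β, ∃ c : F.ConnectedComponent,
      Contains (disjUnionG T T ⊔ fromEdgeSet {s(Sum.inl u, Sum.inr v)}) (F.induce c.supp))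
    (k : ℕ) : SatSingle F (unionCopies (⊤ : SimpleGraph α) k T) := by
  have : Finite V := Nat.finite_of_card_ne_zero (by lia)
  simp only [SatSingle, contains_iff_isContained_s19, disjUnionG_eq_sum_s19,
    unionCopies_eq_sum_boxProd] at hnc h1 h2 ⊢
  refine ⟨not_isContained_top_sum (by lia) fun c hc => hnc c ?_, fun x y hne hadj =>
    isContained_top_sum_bot_boxProd_sup_edge hcard hnc h1 h2 hne hadj⟩
  exact isContained_of_isContained_bot_boxProd c.connected_toSimpleGraph.preconnected hc

/-- Claim 1: if no connected component of `F` is contained in the tree `T`, while every `T+e`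
and every `2T+e` contains a connected component of `F`, then for every `k ≥ 0` the disjoint
union of the complete graph on `|V(F)| - 1` vertices with `k` copies of `T` is `F`-saturated. -/
theorem stmt19 {nF t : ℕ} (F : SimpleGraph (Fin nF)) (hF : 1 ≤ Nat.card F.edgeSet)
    (T : SimpleGraph (Fin t)) (hT : T.IsTree)
    (hnc : ∀ c : F.ConnectedComponent, ¬ Contains T (SimpleGraph.induce c.supp F))
    (h1 : ∀ u v : Fin t, u ≠ v → ¬ T.Adj u v →
      ∃ c : F.ConnectedComponent,
        Contains (T ⊔ SimpleGraph.fromEdgeSet {s(u, v)}) (SimpleGraph.induce c.supp F))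
    (h2 : ∀ u v : Fin t,
      ∃ c : F.ConnectedComponent,
        Contains (disjUnionG T T ⊔
            SimpleGraph.fromEdgeSet {s((Sum.inl u : Fin t ⊕ Fin t), (Sum.inr v : Fin t ⊕ Fin t))})
          (SimpleGraph.induce c.supp F)) :
    ∀ k : ℕ, SatSingle F (unionCopies (⊤ : SimpleGraph (Fin (nF - 1))) k T) := by
  obtain ⟨⟨⟨x, -⟩, -⟩⟩ := (Nat.card_pos_iff.mp hF).1
  exact stmt19_general F T (by simpa using (Nat.sub_add_cancel x.pos).symm) hnc h1 h2
end
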